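/- arXiv:2410.04892 — 5 statements merged into one kernel-verified Lean document; each statement's English description precedes it below -/
import Mathlib

section
/- For every integer k ≥ 0, every matrix (a b; c d) ∈ SL₂(ℤ), and every τ in the upper half-plane ℍ, one has e_k(Λ_{(aτ+b)/(cτ+d)}(0)) = (cτ+d)^{2k} · e_k(Λ_τ(0)); that is, e_k(Λ_τ(0)) transforms like a modular form of weight 2k on SL₂(ℤ). -/
/-!
Write `j = cτ + d` and `γτ = (aτ + b)/(cτ + d)`. For `k ≥ 2` the series `G_{2k}` is
`-B_{2k}/(2k)` times the normalised Eisenstein series `E_{2k}`, hence a modular form of weight `2k`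
(`Gser_transform`). For `k = 1` one has `G₂ = -E₂/12`, and the quasi-modular defect of `E₂` is
cancelled by that of `1/(4πv)`, so `Ĝ₂` transforms with weight `2` (`Ghat2_transform`).

Every term `G_{2k} z^{2k}` in the exponent is therefore unchanged under `(τ, z) ↦ (γτ, z/j)`, and the
prefactor `z` gives `genRHS (γτ) z = j⁻¹ · genRHS τ (j z)` (`genRHS_transform`). Expanding both sides
in powers of `z` and comparing coefficients (`coeff_eq_of_hasSum_odd`) gives
`e_k(γτ) = j^{2k} e_k(τ)`.
-/

open Complex Filter
open scoped Real

noncomputable section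

/-- `q = e^{2πiτ}`. -/
def qq (τ : ℂ) : ℂ := Complex.exp (2 * (π : ℂ) * Complex.I * τ)

/-- The Eisenstein series `G_{2k}(τ) = -B_{2k}/(2k) + 2 ∑_{n≥1} σ_{2k-1}(n) qⁿ`. -/
def Gser (k : ℕ) (τ : ℂ) : ℂ :=
  -((bernoulli (2 * k) : ℚ) : ℂ) / (2 * k) +
    2 * ∑' n : ℕ, ((ArithmeticFunction.sigma (2 * k - 1)) (n + 1) : ℂ) * qq τ ^ (n + 1)

/-- The completed Eisenstein series `Ĝ₂(τ) = G₂(τ) + 1/(4πv)`. -/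
def Ghat2 (τ : ℂ) : ℂ := Gser 1 τ + 1 / (4 * (π : ℂ) * (τ.im : ℂ))

/-- The right-hand side `z · exp(−Ĝ₂(τ)(2πiz)²/2 − ∑_{k≥2} G_{2k}(τ)(2πiz)^{2k}/(2k)!)`
of the generating identity defining the `e_k(Λ_τ(0))`. -/
def genRHS (τ z : ℂ) : ℂ :=
  z * Complex.exp (-(Ghat2 τ) * (2 * (π : ℂ) * Complex.I * z) ^ 2 / 2 -
    ∑' k : ℕ, Gser (k + 2) τ * (2 * (π : ℂ) * Complex.I * z) ^ (2 * (k + 2)) /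
      (Nat.factorial (2 * (k + 2)) : ℂ))

open scoped MatrixGroups
open UpperHalfPlane hiding I

/-- Uniqueness of the coefficients of an odd power series converging near `0`. -/
lemma coeff_eq_of_hasSum_odd {f : ℂ → ℂ} {u w : ℕ → ℂ} {ε δ : ℝ} (hε : 0 < ε) (hδ : 0 < δ)
    (hu : ∀ z : ℂ, ‖z‖ < ε → HasSum (fun k : ℕ => u k * z ^ (2 * k + 1)) (f z))
    (hw : ∀ z : ℂ, ‖z‖ < δ → HasSum (fun k : ℕ => w k * z ^ (2 * k + 1)) (f z)) (k : ℕ) :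
    u k = w k := by
  have hinj : Function.Injective (fun k : ℕ => 2 * k + 1) := fun m n h => by
    simp only at h; omega
  have key : ∀ (x : ℕ → ℂ) (r : ℝ), 0 < r →
      (∀ z : ℂ, ‖z‖ < r → HasSum (fun k : ℕ => x k * z ^ (2 * k + 1)) (f z)) →
      HasFPowerSeriesAt f (FormalMultilinearSeries.ofScalars ℂ
        (Function.extend (fun k : ℕ => 2 * k + 1) x 0)) 0 := by
    intro x r hr hx
    rw [hasFPowerSeriesAt_iff]
    filter_upwards [Metric.ball_mem_nhds (0 : ℂ) hr] with z hz
    have h := hx z (by simpa using hz)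
    rw [zero_add, ← hinj.hasSum_iff]
    · refine Eq.mp (congrArg (HasSum · _) (funext fun m => ?_)) h
      have e1 := hinj.extend_apply x (0 : ℕ → ℂ) m
      simp [FormalMultilinearSeries.coeff_ofScalars, e1, mul_comm (x m)]
    · intro n hn
      rw [FormalMultilinearSeries.coeff_ofScalars, Function.extend_apply' _ _ _ hn]
      simp
  have h := (key u ε hε hu).eq_formalMultilinearSeries (key w δ hδ hw)
  have h2 := congrArg (fun p => FormalMultilinearSeries.coeff p (2 * k + 1)) h
  simp only [FormalMultilinearSeries.coeff_ofScalars] at h2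
  have e1 := hinj.extend_apply u (0 : ℕ → ℂ) k
  have e2 := hinj.extend_apply w (0 : ℕ → ℂ) k
  rwa [e1, e2] at h2

lemma bernoulli_two_mul_ne_zero {k : ℕ} (hk : k ≠ 0) : ((bernoulli (2 * k) : ℚ) : ℂ) ≠ 0 := by
  intro h
  have h1 := riemannZeta_two_mul_nat hk
  rw [h] at h1
  refine riemannZeta_ne_zero_of_one_lt_re (s := 2 * (k : ℂ)) ?_ (by simpa using h1)
  have : (1 : ℝ) ≤ k := by exact_mod_cast Nat.one_le_iff_ne_zero.mpr hk
  simp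
  linarith

/-- The `q`-series of `Gser`, reindexed by the positive integers. -/
lemma tsum_sigma_qq (m : ℕ) (τ : ℂ) :
    ∑' n : ℕ, ((ArithmeticFunction.sigma m) (n + 1) : ℂ) * qq τ ^ (n + 1) =
      ∑' n : ℕ+, ((ArithmeticFunction.sigma m) n : ℂ) *
        Complex.exp (2 * (π : ℂ) * Complex.I * τ) ^ (n : ℕ) := by
  rw [tsum_pnat_eq_tsum_succ (f := fun n => ((ArithmeticFunction.sigma m) n : ℂ) *
        Complex.exp (2 * (π : ℂ) * Complex.I * τ) ^ (n : ℕ))]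
  rfl

lemma Gser_eq_E {k : ℕ} (hk : 3 ≤ 2 * k) (z : ℍ) :
    Gser k z = -((bernoulli (2 * k) : ℚ) : ℂ) / (2 * k) * ModularForm.E hk z := by
  have hB : ((bernoulli (2 * k) : ℚ) : ℂ) ≠ 0 := bernoulli_two_mul_ne_zero (by omega)
  have hk0 : (k : ℂ) ≠ 0 := by
    rw [Nat.cast_ne_zero]; omega
  rw [EisensteinSeries.q_expansion_bernoulli hk (even_two_mul k), Gser, tsum_sigma_qq]
  simp only [zpow_natCast]
  push_cast
  field_simp
  ring

lemma Gser_one_eq_E2 (z : ℍ) : Gser 1 z = -EisensteinSeries.E2 z / 12 := by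
  have h := EisensteinSeries.E2_eq_tsum_cexp z
  rw [Gser, tsum_sigma_qq, h]
  have hB : bernoulli 2 = 1 / 6 := by rw [bernoulli_two]; norm_num
  simp only [mul_one, hB]
  push_cast
  norm_num
  ring

lemma Gser_transform {k : ℕ} (hk : 3 ≤ 2 * k) (γ : SL(2, ℤ)) (z : ℍ) :
    Gser k ((γ • z : ℍ) : ℂ) = (γ 1 0 * (z : ℂ) + γ 1 1) ^ (2 * k) * Gser k z := by
  have h := SlashInvariantForm.slash_action_eqn'' (Γ := 𝒮ℒ) (ModularForm.E hk)
    (γ := Matrix.SpecialLinearGroup.mapGL ℝ γ) ⟨γ, rfl⟩ z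
  change ModularForm.E hk (γ • z) = UpperHalfPlane.denom γ z ^ _ * _ at h
  rw [Gser_eq_E hk, Gser_eq_E hk, h, ModularGroup.denom_apply, zpow_natCast]
  ring

lemma Ghat2_transform (γ : SL(2, ℤ)) (z : ℍ) :
    Ghat2 ((γ • z : ℍ) : ℂ) = (γ 1 0 * (z : ℂ) + γ 1 1) ^ 2 * Ghat2 z := by
  have h := congrFun (EisensteinSeries.E2_slash_action γ) z
  have him := ModularGroup.im_smul_eq_div_normSq γ z
  have hj : UpperHalfPlane.denom γ z ≠ 0 := UpperHalfPlane.denom_ne_zero γ z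
  rw [ModularForm.SL_slash_apply] at h
  simp only [Pi.sub_apply, Pi.smul_apply, EisensteinSeries.D2, smul_eq_mul, riemannZeta_two] at h
  rw [Ghat2, Ghat2, Gser_one_eq_E2, Gser_one_eq_E2, UpperHalfPlane.coe_im, UpperHalfPlane.coe_im,
    him, ← ModularGroup.denom_apply]
  have hπ : (π : ℂ) ≠ 0 := by exact_mod_cast Real.pi_ne_zero
  have hv : ((z.im : ℝ) : ℂ) ≠ 0 := by exact_mod_cast z.im_ne_zero
  -- `j - j̄ = 2icv`: the non-holomorphic correction compensates the defect of `E₂`.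
  have hconj : (starRingEnd ℂ) (UpperHalfPlane.denom γ z) =
      UpperHalfPlane.denom γ z - 2 * Complex.I * γ 1 0 * z.im := by
    rw [ModularGroup.denom_apply]
    apply Complex.ext <;> simp
    ring
  have hn : (Complex.normSq (UpperHalfPlane.denom γ z) : ℂ) =
      UpperHalfPlane.denom γ z *
        (UpperHalfPlane.denom γ z - 2 * Complex.I * γ 1 0 * z.im) := by
    rw [← hconj, Complex.mul_conj]
  rw [Complex.ofReal_div, hn]
  generalize UpperHalfPlane.denom γ z = j at *
  have hE : EisensteinSeries.E2 (γ • z) = j ^ 2 * (EisensteinSeries.E2 z -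
      1 / (2 * ((π : ℂ) ^ 2 / 6)) * (2 * π * Complex.I * γ 1 0 / j)) := by
    rw [← h, zpow_neg]
    have : j ^ (2 : ℤ) = j ^ 2 := by norm_cast
    rw [this]
    field_simp
  rw [hE]
  field_simp
  ring

lemma genRHS_transform (γ : SL(2, ℤ)) (τ : ℍ) (z : ℂ) :
    genRHS ((γ • τ : ℍ) : ℂ) z = (γ 1 0 * (τ : ℂ) + γ 1 1)⁻¹ *
      genRHS τ ((γ 1 0 * (τ : ℂ) + γ 1 1) * z) := by
  have hj : (γ 1 0 * (τ : ℂ) + γ 1 1) ≠ 0 := by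
    rw [← ModularGroup.denom_apply]
    exact UpperHalfPlane.denom_ne_zero γ τ
  have hG : ∀ k : ℕ, Gser (k + 2) ((γ • τ : ℍ) : ℂ) =
      (γ 1 0 * (τ : ℂ) + γ 1 1) ^ (2 * (k + 2)) * Gser (k + 2) τ :=
    fun k => Gser_transform (by omega) γ τ
  simp only [genRHS, Ghat2_transform, hG]
  generalize (γ 1 0 * (τ : ℂ) + γ 1 1) = j at *
  rw [← mul_assoc, inv_mul_cancel_left₀ hj]
  congr 3
  · ring
  · refine tsum_congr fun k => ?_
    rw [show 2 * (π : ℂ) * Complex.I * (j * z) = j * (2 * π * Complex.I * z) by ring,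
      mul_pow j]
    ring

/-- If `e k τ = e_k(Λ_τ(0))` is defined by the generating identity
`∑_{k≥0} (−1)^k e_k(Λ_τ(0)) z^{2k+1} = z·exp(−Ĝ₂(τ)(2πiz)²/2 − ∑_{k≥2} G_{2k}(τ)(2πiz)^{2k}/(2k)!)`
for `z` near `0`, then for every `k ≥ 0`, every `(a b; c d) ∈ SL₂(ℤ)` and every `τ ∈ ℍ`,
`e_k(Λ_{(aτ+b)/(cτ+d)}(0)) = (cτ+d)^{2k} e_k(Λ_τ(0))`. -/
theorem ek_modular_weight_two_k
    (e : ℕ → ℂ → ℂ)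
    (he : ∀ τ : ℂ, 0 < τ.im → ∃ ε > 0, ∀ z : ℂ, ‖z‖ < ε →
      HasSum (fun k : ℕ => (-1 : ℂ) ^ k * e k τ * z ^ (2 * k + 1)) (genRHS τ z))
    (k : ℕ) (a b c d : ℤ) (hdet : a * d - b * c = 1)
    (τ : ℂ) (hτ : 0 < τ.im) :
    e k ((a * τ + b) / (c * τ + d)) = (c * τ + d) ^ (2 * k) * e k τ := by
  let γ : SL(2, ℤ) := ⟨!![a, b; c, d], by rw [Matrix.det_fin_two_of]; exact hdet⟩
  let t : ℍ := ⟨τ, hτ⟩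
  have hγt : ((γ • t : ℍ) : ℂ) = (a * τ + b) / (c * τ + d) := by
    rw [UpperHalfPlane.coe_specialLinearGroup_apply]
    simp [γ, t]
  have hgen : ∀ z, genRHS ((a * τ + b) / (c * τ + d)) z =
      (c * τ + d)⁻¹ * genRHS τ ((c * τ + d) * z) := by
    intro z
    rw [← hγt]
    exact genRHS_transform γ t z
  have hj : (c * τ + d : ℂ) ≠ 0 := UpperHalfPlane.denom_ne_zero γ t
  obtain ⟨ε, hε, h1⟩ := he τ hτ
  obtain ⟨δ, hδ, h2⟩ := he ((a * τ + b) / (c * τ + d)) (hγt ▸ (γ • t).im_pos)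
  have hjpos : 0 < ‖(c * τ + d : ℂ)‖ := norm_pos_iff.mpr hj
  have h := coeff_eq_of_hasSum_odd (w := fun k => (-1 : ℂ) ^ k * ((c * τ + d) ^ (2 * k) * e k τ))
    hδ (div_pos hε hjpos) h2 (fun z hz => ?_) k
  · exact mul_left_cancel₀ (pow_ne_zero k (by norm_num)) h
  · have h3 := (h1 ((c * τ + d) * z) (by
      rw [norm_mul, mul_comm]; exact (lt_div_iff₀ hjpos).mp hz)).mul_left (c * τ + d : ℂ)⁻¹
    rw [hgen]
    refine Eq.mp (congrArg (HasSum · _) (funext fun m => ?_)) h3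
    rw [mul_pow, pow_succ (c * τ + d : ℂ)]
    field_simp
end
end

section
/- For every integer k ≥ 0 there exist holomorphic functions f₀, f₁, …, f_k : ℍ → ℂ, with f_k not identically zero, such that for all τ = u + iv ∈ ℍ one has e_k(Λ_τ(0)) = ∑_{j=0}^{k} f_j(τ) v^{−j}. In other words, e_k(Λ_τ(0)) is a polynomial of degree exactly k in 1/v with holomorphic coefficients (and hence, combined with its weight-2k modular transformation, an almost holomorphic modular form of weight 2k and depth k). -/
/-!
The generating function is even up to the factor `z`, so put `w = z²`. Splitting
`Ĝ₂ = G₂ + 1/(4πv)` in the exponent gives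
`∑ (-1)^k e_k w^k = exp (π w / (2 v)) · exp (H_τ(w))`, where
`H_τ(w) = -∑_{k ≥ 1} G_{2k}(τ) (2πi)^{2k} w^k / (2k)!` (`genRHS_eq`).
Comparing Taylor coefficients at `w = 0` by Leibniz' rule (`e_eq`),
`(-1)^k k! e_k = ∑_j (k choose j) (π / (2 v))^j h_{k-j}(τ)`, where `h_n(τ)` is the `n`-th derivative
of `exp H_τ` at `0`. The relation `(exp H)' = H' exp H` expresses `h_{n+1}` through `h_0, …, h_n`
and the `G_{2k}` (`holCoeff_succ`), so each `h_n` is holomorphic on the upper half-plane. Since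
`h_0 = 1`, the coefficient of `v^{-k}` is the nonzero constant `(-1)^k (π/2)^k / k!`.

The series `H_τ` has a positive radius of convergence because
`|G_{2k}(τ)| ≤ 4 (2k)! / (1 - |q|)^{2k+1}` (`Gser_bound`). Without this, the infinite sum in the
definition of `genRHS` could take the default value `0`.
-/


open Complex Filter
open scoped Real

noncomputable section

/-! ### Growth and holomorphy of the Eisenstein series -/

lemma norm_qq (τ : ℂ) : ‖qq τ‖ = Real.exp (-(2 * π * τ.im)) := by
  rw [qq, Complex.norm_exp]
  congr 1
  simp [mul_assoc, Complex.mul_re]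

lemma norm_qq_lt_one {τ : ℂ} (h : 0 < τ.im) : ‖qq τ‖ < 1 := by
  rw [norm_qq, Real.exp_lt_one_iff]
  have := Real.pi_pos
  have : 0 < 2 * π * τ.im := by positivity
  linarith

/-- Uses `σ_{2k-1}(m) ≤ m^{2k} ≤ m (m+1) ⋯ (m+2k-1)`; the majorant is the general term of the
binomial series of `(2k)! / (1 - r)^{2k+1}`. -/
lemma sigma_term_bound {k : ℕ} (hk : k ≠ 0) (n : ℕ) {q : ℂ} {r : ℝ} (hq : ‖q‖ ≤ r) (hr : r < 1) :
    ‖((ArithmeticFunction.sigma (2 * k - 1)) (n + 1) : ℂ) * q ^ (n + 1)‖ ≤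
      ((2 * k).factorial : ℝ) * (((n + 2 * k).choose (2 * k) : ℝ) * r ^ n) := by
  have hr0 : 0 ≤ r := (norm_nonneg q).trans hq
  rw [norm_mul, norm_pow, Complex.norm_natCast, ← mul_assoc]
  have h1 : (ArithmeticFunction.sigma (2 * k - 1)) (n + 1) ≤
      (2 * k).factorial * (n + 2 * k).choose (2 * k) := by
    calc _ ≤ (n + 1) ^ (2 * k - 1 + 1) := ArithmeticFunction.sigma_le_pow_succ _ _
      _ = (n + 1) ^ (2 * k) := by congr 1; omega
      _ ≤ (n + 1).ascFactorial (2 * k) := Nat.pow_succ_le_ascFactorial _ _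
      _ = _ := Nat.ascFactorial_eq_factorial_mul_choose _ _
  have h2 : ‖q‖ ^ (n + 1) ≤ r ^ n :=
    (pow_le_pow_left₀ (norm_nonneg q) hq _).trans (pow_le_pow_of_le_one hr0 hr.le (Nat.le_succ n))
  exact mul_le_mul (by exact_mod_cast h1) h2 (by positivity) (by positivity)

lemma hasSum_majorant (k : ℕ) {r : ℝ} (h0 : 0 ≤ r) (hr : r < 1) :
    HasSum (fun n : ℕ => ((2 * k).factorial : ℝ) * (((n + 2 * k).choose (2 * k) : ℝ) * r ^ n))
      (((2 * k).factorial : ℝ) * (1 / (1 - r) ^ (2 * k + 1))) := by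
  have hn : ‖r‖ < 1 := by rwa [Real.norm_of_nonneg h0]
  have h := hasSum_choose_mul_geometric_of_norm_lt_one (2 * k) hn
  exact HasSum.mul_left _ h

lemma differentiableOn_Gser {k : ℕ} (hk : k ≠ 0) :
    DifferentiableOn ℂ (Gser k) {τ : ℂ | 0 < τ.im} := by
  intro τ₀ hτ₀
  have hτ₀' : 0 < τ₀.im := hτ₀
  have hU : IsOpen {τ : ℂ | τ₀.im / 2 < τ.im} := isOpen_lt continuous_const Complex.continuous_im
  have hmem : τ₀ ∈ {τ : ℂ | τ₀.im / 2 < τ.im} := by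
    simp only [Set.mem_ofPred_eq]; linarith
  set r : ℝ := Real.exp (-(2 * π * (τ₀.im / 2))) with hr
  have hr1 : r < 1 := by
    rw [hr, Real.exp_lt_one_iff]
    have := Real.pi_pos
    have : 0 < 2 * π * (τ₀.im / 2) := by positivity
    linarith
  have key : DifferentiableOn ℂ (fun τ : ℂ => ∑' n : ℕ,
      ((ArithmeticFunction.sigma (2 * k - 1)) (n + 1) : ℂ) * qq τ ^ (n + 1))
      {τ : ℂ | τ₀.im / 2 < τ.im} := by
    refine differentiableOn_tsum_of_summable_norm
      (hasSum_majorant k (Real.exp_pos _).le hr1).summable (fun n => ?_) hU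
      (fun n w hw => sigma_term_bound hk n ?_ hr1)
    · apply Differentiable.differentiableOn
      unfold qq
      fun_prop
    · rw [norm_qq, Real.exp_le_exp]
      have hw' : τ₀.im / 2 < w.im := hw
      have := Real.pi_pos
      gcongr
  have h := (key.differentiableAt (hU.mem_nhds hmem)).const_mul 2
  exact (h.const_add _).differentiableWithinAt

/-- From `ζ(2k) ≤ ζ(2) = π²/6` and Euler's formula for `ζ(2k)`. -/
lemma bernoulli_bound {k : ℕ} (hk : k ≠ 0) :
    |((bernoulli (2 * k) : ℚ) : ℝ)| ≤ 2 * ((2 * k).factorial : ℝ) := by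
  have h := hasSum_zeta_nat hk
  have hle : (-1 : ℝ) ^ (k + 1) * (2 : ℝ) ^ (2 * k - 1) * π ^ (2 * k) *
        bernoulli (2 * k) / (2 * k).factorial ≤ π ^ 2 / 6 := by
    refine hasSum_le (fun n => ?_) h hasSum_zeta_two
    rcases Nat.eq_zero_or_pos n with rfl | hn
    · simp [hk]
    · have : (1 : ℝ) ≤ n := by exact_mod_cast hn
      gcongr
      omega
  have h0 := h.nonneg (fun n => by positivity)
  have hf : (0 : ℝ) < (2 * k).factorial := by positivity
  rw [← abs_of_nonneg h0, abs_div, abs_mul, abs_mul, abs_mul, abs_pow, abs_neg, abs_one, one_pow,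
    one_mul, abs_of_pos hf, abs_of_pos (by positivity), abs_of_pos (by positivity),
    div_le_iff₀ hf] at hle
  have hπ3 := Real.pi_gt_three
  have h2 : (1 : ℝ) ≤ 2 ^ (2 * k - 1) := one_le_pow₀ (by norm_num)
  have h3 : π ^ 2 ≤ π ^ (2 * k) := pow_le_pow_right₀ (by linarith) (by omega)
  set b := |((bernoulli (2 * k) : ℚ) : ℝ)|
  have hb : 0 ≤ b := abs_nonneg _
  have h5 : π ^ 2 * b ≤ π ^ 2 / 6 * (2 * k).factorial := by
    refine le_trans ?_ hle
    gcongr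
    nlinarith [sq_nonneg π, pow_pos Real.pi_pos (2 * k)]
  have h6 : b ≤ (2 * k).factorial / 6 := by
    refine le_of_mul_le_mul_left (h5.trans_eq (by ring)) (by positivity : 0 < π ^ 2)
  linarith

lemma Gser_bound {k : ℕ} (hk : k ≠ 0) {τ : ℂ} (hτ : 0 < τ.im) :
    ‖Gser k τ‖ ≤ ((2 * k).factorial : ℝ) * (4 / (1 - ‖qq τ‖) ^ (2 * k + 1)) := by
  have hr1 := norm_qq_lt_one hτ
  have hr0 := norm_nonneg (qq τ)
  have hs := tsum_of_norm_bounded (hasSum_majorant k hr0 hr1)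
    (fun n => sigma_term_bound hk n le_rfl hr1)
  have hpos : 0 < 1 - ‖qq τ‖ := by linarith
  have h1 : 1 ≤ 1 / (1 - ‖qq τ‖) ^ (2 * k + 1) := by
    rw [le_div_iff₀ (by positivity), one_mul]
    exact pow_le_one₀ hpos.le (by linarith)
  have hb : ‖-((bernoulli (2 * k) : ℚ) : ℂ) / (2 * k)‖ ≤ 2 * ((2 * k).factorial : ℝ) := by
    have e1 : ‖((bernoulli (2 * k) : ℚ) : ℂ)‖ = |((bernoulli (2 * k) : ℚ) : ℝ)| := by
      rw [← Complex.ofReal_ratCast, Complex.norm_real, Real.norm_eq_abs]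
    have e2 : ‖(2 * k : ℂ)‖ = ((2 * k : ℕ) : ℝ) := by
      rw [← Complex.norm_natCast]; push_cast; rfl
    rw [norm_div, norm_neg, e1, e2]
    refine (div_le_self (abs_nonneg _) ?_).trans (bernoulli_bound hk)
    exact_mod_cast (by omega : 1 ≤ 2 * k)
  have hf : (0 : ℝ) < (2 * k).factorial := by positivity
  calc ‖Gser k τ‖ ≤ 2 * ((2 * k).factorial : ℝ) +
        2 * (((2 * k).factorial : ℝ) * (1 / (1 - ‖qq τ‖) ^ (2 * k + 1))) := by
        refine (norm_add_le _ _).trans (add_le_add hb ?_)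
        rw [norm_mul]
        simpa using hs
    _ ≤ _ := by
        rw [show 4 / (1 - ‖qq τ‖) ^ (2 * k + 1) = 4 * (1 / (1 - ‖qq τ‖) ^ (2 * k + 1)) by ring]
        nlinarith

/-! ### The holomorphic part of the generating function -/

/-- The coefficient of `w^k`, `w = z²`, in the holomorphic part of the exponent
(with `G₂` in place of `Ĝ₂`). -/
def expCoeff (k : ℕ) (τ : ℂ) : ℂ :=
  if k = 0 then 0 else -Gser k τ * (2 * (π : ℂ) * Complex.I) ^ (2 * k) / ((2 * k).factorial : ℂ)

/-- The holomorphic part of the exponent, as a function of `w = z²`. -/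
def expSeries (τ w : ℂ) : ℂ := ∑' k : ℕ, expCoeff k τ * w ^ k

lemma differentiableOn_expCoeff (k : ℕ) :
    DifferentiableOn ℂ (expCoeff k) {τ : ℂ | 0 < τ.im} := by
  unfold expCoeff
  by_cases hk : k = 0
  · simp [hk]
  · simp only [hk, if_false]
    exact (((differentiableOn_Gser hk).fun_neg).mul_const _).div_const _

lemma expCoeff_bound (k : ℕ) {τ : ℂ} (hτ : 0 < τ.im) :
    ‖expCoeff k τ‖ ≤ 4 / (1 - ‖qq τ‖) * ((2 * π / (1 - ‖qq τ‖)) ^ 2) ^ k := by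
  have hpos : 0 < 1 - ‖qq τ‖ := by linarith [norm_qq_lt_one hτ]
  unfold expCoeff
  split_ifs with hk
  · simp only [norm_zero]; positivity
  · have hf : (0 : ℝ) < (2 * k).factorial := by positivity
    have e : ‖(2 * (π : ℂ) * Complex.I)‖ = 2 * π := by
      simp [abs_of_pos Real.pi_pos]
    rw [norm_div, norm_mul, norm_neg, norm_pow, e, Complex.norm_natCast, div_le_iff₀ hf]
    calc _ ≤ ((2 * k).factorial : ℝ) * (4 / (1 - ‖qq τ‖) ^ (2 * k + 1)) * (2 * π) ^ (2 * k) := by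
          gcongr
          exact Gser_bound hk hτ
      _ = _ := by
          rw [← pow_mul, div_pow, pow_succ]
          field_simp

lemma eventually_summable_expSeries {τ : ℂ} (hτ : 0 < τ.im) :
    ∀ᶠ w : ℂ in nhds 0, Summable (fun k => expCoeff k τ * w ^ k) := by
  set A : ℝ := (2 * π / (1 - ‖qq τ‖)) ^ 2
  have hA : 0 ≤ A := sq_nonneg _
  have hlim : ∀ᶠ w : ℂ in nhds 0, A * ‖w‖ < 1 := by
    have : Continuous fun w : ℂ => A * ‖w‖ := by fun_prop
    exact this.continuousAt.eventually_lt continuousAt_const (by simp)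
  filter_upwards [hlim] with w hw
  refine Summable.of_norm_bounded (g := fun k => 4 / (1 - ‖qq τ‖) * (A * ‖w‖) ^ k)
    ((summable_geometric_of_lt_one (by positivity) hw).mul_left _) (fun k => ?_)
  rw [norm_mul, norm_pow, mul_pow, ← mul_assoc]
  gcongr
  exact expCoeff_bound k hτ

/-- A convergent power series at `0` is analytic with the expected iterated derivatives. -/
lemma analyticAt_and_iteratedDeriv {f : ℂ → ℂ} {a : ℕ → ℂ}
    (h : ∀ᶠ w : ℂ in nhds 0, HasSum (fun n => a n * w ^ n) (f w)) :
    AnalyticAt ℂ f 0 ∧ ∀ n, iteratedDeriv n f 0 = n.factorial * a n := by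
  have hp : HasFPowerSeriesAt f (FormalMultilinearSeries.ofScalars ℂ a) 0 := by
    rw [hasFPowerSeriesAt_iff]
    filter_upwards [h] with w hw
    simpa [mul_comm] using hw
  refine ⟨hp.analyticAt, fun n => ?_⟩
  obtain ⟨r, hr⟩ := hp
  have := hr.factorial_smul (1 : ℂ) n
  rw [iteratedDeriv_eq_iteratedFDeriv, ← this]
  simp

lemma expSeries_props {τ : ℂ} (hτ : 0 < τ.im) :
    AnalyticAt ℂ (expSeries τ) 0 ∧
      ∀ n, iteratedDeriv n (expSeries τ) 0 = n.factorial * expCoeff n τ :=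
  analyticAt_and_iteratedDeriv ((eventually_summable_expSeries hτ).mono fun _ h => h.hasSum)

/-- `n!` times the `n`-th Taylor coefficient in `w` of `exp (expSeries τ w)`. -/
def holCoeff (n : ℕ) (τ : ℂ) : ℂ := iteratedDeriv n (fun w => Complex.exp (expSeries τ w)) 0

lemma holCoeff_zero (τ : ℂ) : holCoeff 0 τ = 1 := by
  have : expSeries τ 0 = 0 := by
    unfold expSeries
    rw [tsum_eq_single 0 (fun k hk => by simp [hk])]
    simp [expCoeff]
  simp [holCoeff, this]

/-- Leibniz' rule applied to `(exp H)' = H' · exp H`. -/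
lemma holCoeff_succ (n : ℕ) {τ : ℂ} (hτ : 0 < τ.im) :
    holCoeff (n + 1) τ = ∑ i ∈ Finset.range (n + 1),
      (n.choose i : ℂ) * ((i + 1).factorial * expCoeff (i + 1) τ) * holCoeff (n - i) τ := by
  obtain ⟨han, hder⟩ := expSeries_props hτ
  have hE : AnalyticAt ℂ (fun w => Complex.exp (expSeries τ w)) 0 := han.cexp
  have hd : deriv (fun w => Complex.exp (expSeries τ w)) =ᶠ[nhds 0]
      (deriv (expSeries τ) * fun w => Complex.exp (expSeries τ w)) := by
    filter_upwards [han.eventually_analyticAt] with w hw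
    rw [Pi.mul_apply, deriv_cexp hw.differentiableAt, mul_comm]
  rw [holCoeff, iteratedDeriv_succ', hd.iteratedDeriv_eq,
    iteratedDeriv_mul han.deriv.contDiffAt hE.contDiffAt]
  refine Finset.sum_congr rfl fun i _ => ?_
  rw [← iteratedDeriv_succ', hder]
  rfl

lemma differentiableOn_holCoeff (n : ℕ) :
    DifferentiableOn ℂ (holCoeff n) {τ : ℂ | 0 < τ.im} := by
  induction n using Nat.strong_induction_on with
  | _ n ih =>
    rcases n with _ | n
    · exact (differentiableOn_const 1).congr fun τ _ => holCoeff_zero τ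
    · refine DifferentiableOn.congr ?_ fun τ hτ => holCoeff_succ n hτ
      refine DifferentiableOn.fun_sum fun i _ => ?_
      exact (((differentiableOn_expCoeff (i + 1)).const_mul _).const_mul _).mul
        (ih (n - i) (by omega))

/-! ### Separating the non-holomorphic factor -/

/-- With `w = z²`, the term `1/(4πv)` of `Ĝ₂` contributes the factor `exp (π w / (2 v))`. -/
lemma genRHS_eq {τ z : ℂ} (hτ : 0 < τ.im)
    (hs : Summable (fun k => expCoeff k τ * (z ^ 2) ^ k)) :
    genRHS τ z = z * (Complex.exp ((π : ℂ) / (2 * τ.im) * z ^ 2) *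
      Complex.exp (expSeries τ (z ^ 2))) := by
  have hv : (τ.im : ℂ) ≠ 0 := by exact_mod_cast hτ.ne'
  have hπ : (π : ℂ) ≠ 0 := by exact_mod_cast Real.pi_ne_zero
  have htail : ∑' k : ℕ, Gser (k + 2) τ * (2 * (π : ℂ) * Complex.I * z) ^ (2 * (k + 2)) /
      (Nat.factorial (2 * (k + 2)) : ℂ) = -∑' k : ℕ, expCoeff (k + 2) τ * (z ^ 2) ^ (k + 2) := by
    rw [← tsum_neg]
    refine tsum_congr fun k => ?_
    simp only [expCoeff, Nat.add_eq_zero_iff, OfNat.ofNat_ne_zero, and_false, if_false]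
    rw [mul_pow _ z, ← pow_mul]
    ring
  rw [genRHS, ← Complex.exp_add, htail, expSeries, ← hs.sum_add_tsum_nat_add 2]
  congr 2
  simp only [Finset.sum_range_succ, Finset.sum_range_zero, expCoeff, Ghat2]
  simp only [if_true, one_ne_zero, if_false, mul_one, Nat.factorial_two]
  have hI : Complex.I ^ 2 = -1 := Complex.I_sq
  simp only [mul_pow, hI]
  field_simp
  push_cast
  ring

lemma e_eq (e : ℕ → ℂ → ℂ) {τ : ℂ} (hτ : 0 < τ.im)
    (he : ∃ ε > 0, ∀ z : ℂ, ‖z‖ < ε →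
      HasSum (fun k : ℕ => (-1 : ℂ) ^ k * e k τ * z ^ (2 * k + 1)) (genRHS τ z)) (k : ℕ) :
    k.factorial * ((-1) ^ k * e k τ) = ∑ j ∈ Finset.range (k + 1),
      (k.choose j : ℂ) * ((π : ℂ) / (2 * τ.im)) ^ j * holCoeff (k - j) τ := by
  obtain ⟨ε, hε, he⟩ := he
  set c : ℂ := (π : ℂ) / (2 * τ.im) with hc
  let F : ℂ → ℂ := (fun w => Complex.exp (c * w)) * fun w => Complex.exp (expSeries τ w)
  have hne : ∀ w : ℂ, w ≠ 0 → ‖w‖ < ε ^ 2 → Summable (fun k => expCoeff k τ * w ^ k) →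
      HasSum (fun k : ℕ => (-1 : ℂ) ^ k * e k τ * w ^ k) (F w) := by
    intro w hw hwε hs
    obtain ⟨z, rfl⟩ : ∃ z : ℂ, w = z ^ 2 :=
      ⟨w ^ ((2 : ℕ) : ℂ)⁻¹, (Complex.cpow_nat_inv_pow w two_ne_zero).symm⟩
    have hz : z ≠ 0 := by rintro rfl; simp at hw
    have hzε : ‖z‖ < ε := by
      rw [norm_pow] at hwε
      exact lt_of_pow_lt_pow_left₀ 2 hε.le hwε
    have h := (he z hzε).mul_left z⁻¹
    rw [genRHS_eq hτ hs, inv_mul_cancel_left₀ hz] at h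
    refine h.congr_fun fun k => ?_
    rw [pow_succ z (2 * k), pow_mul]
    field_simp
  -- At `w = 0` the generating identity reads `0 = 0`, so `F` is known to be the sum of the series
  -- only for `w ≠ 0`. `F₂` is the sum of the series; it agrees with `F` at `0` by continuity.
  let F₂ : ℂ → ℂ := fun w => if w = 0 then e 0 τ else F w
  have hF₂ : ∀ᶠ w : ℂ in nhds 0, HasSum (fun k : ℕ => (-1 : ℂ) ^ k * e k τ * w ^ k) (F₂ w) := by
    filter_upwards [eventually_summable_expSeries hτ, Metric.ball_mem_nhds (0 : ℂ) (pow_pos hε 2)]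
      with w hs hw
    by_cases h0 : w = 0
    · subst h0
      have := hasSum_single (f := fun k : ℕ => (-1 : ℂ) ^ k * e k τ * 0 ^ k) 0
        (fun k hk => by simp [hk])
      simpa [F₂] using this
    · simpa [F₂, h0] using hne w h0 (by simpa using hw) hs
  obtain ⟨han₂, hder⟩ := analyticAt_and_iteratedDeriv hF₂
  have hE : AnalyticAt ℂ (fun w => Complex.exp (expSeries τ w)) 0 := (expSeries_props hτ).1.cexp
  have hX : AnalyticAt ℂ (fun w : ℂ => Complex.exp (c * w)) 0 := by fun_prop
  have hEq : F₂ =ᶠ[nhds 0] F := by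
    refine (han₂.continuousAt.eventuallyEq_nhds_iff_eventuallyEq_nhdsNE
      (hX.mul hE).continuousAt).1 ?_
    filter_upwards [self_mem_nhdsWithin] with w hw
    exact if_neg hw
  rw [← hder, hEq.iteratedDeriv_eq, iteratedDeriv_mul hX.contDiffAt hE.contDiffAt]
  refine Finset.sum_congr rfl fun j _ => ?_
  rw [iteratedDeriv_cexp_const_mul]
  simp [holCoeff]

/-- For every `k ≥ 0` there exist holomorphic functions `f₀,…,f_k` on ℍ,
with `f_k` not identically zero, such that `e_k(Λ_τ(0)) = ∑_{j=0}^{k} f_j(τ) v^{−j}`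
for all `τ = u+iv ∈ ℍ`; i.e. `e_k(Λ_τ(0))` is a polynomial of degree exactly `k` in `1/v`
with holomorphic coefficients. -/
theorem ek_almost_holomorphic
    (e : ℕ → ℂ → ℂ)
    (he : ∀ τ : ℂ, 0 < τ.im → ∃ ε > 0, ∀ z : ℂ, ‖z‖ < ε →
      HasSum (fun k : ℕ => (-1 : ℂ) ^ k * e k τ * z ^ (2 * k + 1)) (genRHS τ z))
    (k : ℕ) :
    ∃ f : ℕ → ℂ → ℂ,
      (∀ j, j ≤ k → DifferentiableOn ℂ (f j) {τ : ℂ | 0 < τ.im}) ∧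
      (∃ τ : ℂ, 0 < τ.im ∧ f k τ ≠ 0) ∧
      (∀ τ : ℂ, 0 < τ.im →
        e k τ = ∑ j ∈ Finset.range (k + 1), f j τ / (τ.im : ℂ) ^ j) := by
  refine ⟨fun j τ => (-1) ^ k / k.factorial * ((k.choose j : ℂ) * ((π : ℂ) / 2) ^ j) *
    holCoeff (k - j) τ, fun j _ => (differentiableOn_holCoeff (k - j)).const_mul _,
    ⟨Complex.I, by simp, ?_⟩, fun τ hτ => ?_⟩
  · simp [holCoeff_zero, Nat.factorial_ne_zero, Real.pi_ne_zero]
  · have h := e_eq e hτ (he τ hτ) k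
    have hf : (k.factorial : ℂ) ≠ 0 := by exact_mod_cast k.factorial_ne_zero
    have hsq : ((-1 : ℂ) ^ k) * (-1) ^ k = 1 := by rw [← mul_pow]; simp
    have h' : e k τ = (-1) ^ k / k.factorial * (k.factorial * ((-1) ^ k * e k τ)) := by
      field_simp
      linear_combination -(e k τ) * hsq
    rw [h', h, Finset.mul_sum]
    refine Finset.sum_congr rfl fun j _ => ?_
    rw [← div_div, div_pow _ (τ.im : ℂ)]
    ring
end
end

section
/- The function Φ(z;τ) := −ϑ(z;τ)/(2π η(τ)³) (which equals the modified generating function e^{−πz²/(2v)} ∑_{k≥0} (−1)^k e_k(Λ_τ(0)) z^{2k+1} near z = 0) satisfies the modular transformation law of a Jacobi form of weight −1 and index 1/2: for every (a b; c d) ∈ SL₂(ℤ), every z ∈ ℂ, and every τ ∈ ℍ, Φ(z/(cτ+d); (aτ+b)/(cτ+d)) = (cτ+d)^{−1} e^{πicz²/(cτ+d)} Φ(z;τ). -/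
/-!
The group `SL₂(ℤ)` is generated by `S` and `T`, and the factor
`(cτ+d)⁻¹ exp(πi c z²/(cτ+d))` is a cocycle, so the set of matrices for which the transformation
law holds is a subgroup (`PhiLaw.mul`, `PhiLaw.inv`); it remains to treat the two generators.

For `T`, both `ϑ` and `η³` are multiplied by `exp(πi/4)`. For `S`, the shift
`ϑ(z;τ) = exp(πi(z+1/2) + πiτ/4) θ₂(z+1/2+τ/2;τ)` turns the functional equation of the two-variable
theta function into `ϑ(z/τ;-1/τ) = -i (-iτ)^{1/2} exp(πi z²/τ) ϑ(z;τ)`, while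
`η(-1/τ) = (-iτ)^{1/2} η(τ)`; the quotient of the factors is `-i/(-iτ) = 1/τ`.
-/

open Complex Filter
open scoped Real

noncomputable section

/-- The Jacobi theta function `ϑ(z;τ) = ∑_{n∈ℤ+1/2} e^{2πin(z+1/2)} q^{n²/2}`. -/
def jacobiThetaFn (z τ : ℂ) : ℂ :=
  ∑' n : ℤ, Complex.exp (2 * (π : ℂ) * Complex.I * ((n : ℂ) + 1 / 2) * (z + 1 / 2)) *
    Complex.exp ((π : ℂ) * Complex.I * τ * ((n : ℂ) + 1 / 2) ^ 2)

/-- The Dedekind eta function `η(τ) = q^{1/24} ∏_{n≥1} (1 - qⁿ)`. -/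
def dedekindEtaFn (τ : ℂ) : ℂ :=
  Complex.exp (2 * (π : ℂ) * Complex.I * τ / 24) * ∏' n : ℕ, (1 - qq τ ^ (n + 1))

/-- `Φ(z;τ) = −ϑ(z;τ)/(2πη(τ)³)`. -/
def PhiFn (z τ : ℂ) : ℂ := -jacobiThetaFn z τ / (2 * (π : ℂ) * dedekindEtaFn τ ^ 3)

lemma dedekindEtaFn_eq_eta (τ : ℂ) : dedekindEtaFn τ = ModularForm.eta τ := by
  simp [dedekindEtaFn, ModularForm.eta, qq, ModularForm.eta_q, Function.Periodic.qParam]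

lemma jacobiThetaFn_eq_jacobiTheta₂ (z τ : ℂ) :
    jacobiThetaFn z τ =
      cexp (π * I * (z + 1 / 2) + π * I * τ / 4) * jacobiTheta₂ (z + 1 / 2 + τ / 2) τ := by
  rw [jacobiThetaFn, jacobiTheta₂, ← tsum_mul_left]
  refine tsum_congr fun n ↦ ?_
  rw [jacobiTheta₂_term, ← Complex.exp_add, ← Complex.exp_add]
  ring_nf

/-! ### The translation `τ ↦ τ + 1` -/

lemma jacobiThetaFn_add_one (z τ : ℂ) :
    jacobiThetaFn z (τ + 1) = cexp (π * I / 4) * jacobiThetaFn z τ := by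
  rw [jacobiThetaFn, jacobiThetaFn, ← tsum_mul_left]
  refine tsum_congr fun n ↦ ?_
  -- `(n + 1/2)² = n(n+1) + 1/4`, and `n(n+1)` is even.
  obtain ⟨m, hm⟩ := Int.even_mul_succ_self n
  have hm' : (n : ℂ) * (n + 1) = m + m := by exact_mod_cast hm
  have h : (π : ℂ) * I * (τ + 1) * (n + 1 / 2) ^ 2 =
      π * I / 4 + π * I * τ * (n + 1 / 2) ^ 2 + m * (2 * π * I) := by
    linear_combination (π * I : ℂ) * hm'
  rw [h, Complex.exp_add, exp_int_mul_two_pi_mul_I, Complex.exp_add]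
  ring

lemma dedekindEtaFn_add_one_pow_three (τ : ℂ) :
    dedekindEtaFn (τ + 1) ^ 3 = cexp (π * I / 4) * dedekindEtaFn τ ^ 3 := by
  have hq : qq (τ + 1) = qq τ := by
    rw [qq, qq, mul_add, mul_one, Complex.exp_add, exp_two_pi_mul_I, mul_one]
  rw [dedekindEtaFn, dedekindEtaFn, hq, mul_pow, mul_pow, ← mul_assoc, ← Complex.exp_nat_mul,
    ← Complex.exp_nat_mul, ← Complex.exp_add]
  congr 2
  push_cast
  ring

lemma PhiFn_add_one (z τ : ℂ) : PhiFn z (τ + 1) = PhiFn z τ := by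
  rw [PhiFn, PhiFn, jacobiThetaFn_add_one, dedekindEtaFn_add_one_pow_three,
    ← mul_div_mul_left _ (2 * (π : ℂ) * dedekindEtaFn τ ^ 3) (Complex.exp_ne_zero (π * I / 4))]
  ring

/-! ### The inversion `τ ↦ -1/τ` -/

lemma jacobiThetaFn_inversion (z : ℂ) {τ : ℂ} (hτ : τ ≠ 0) :
    jacobiThetaFn (z / τ) (-1 / τ) =
      -I * (-I * τ) ^ (1 / 2 : ℂ) * cexp (π * I * z ^ 2 / τ) * jacobiThetaFn z τ := by
  set w : ℂ := z + τ / 2 - 1 / 2 with hw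
  have h1 : z / τ + 1 / 2 + -1 / τ / 2 = w / τ := by rw [hw]; field_simp; ring
  have h2 : z + 1 / 2 + τ / 2 = w + 1 := by rw [hw]; ring
  have hs : (-I * τ) ^ (1 / 2 : ℂ) ≠ 0 := by simp [Complex.cpow_eq_zero_iff, hτ]
  have hI : (-I : ℂ) = cexp (-(π * I / 2)) := by
    rw [show (-(π * I / 2) : ℂ) = -π / 2 * I by ring, exp_neg_pi_div_two_mul_I]
  rw [jacobiThetaFn_eq_jacobiTheta₂, jacobiThetaFn_eq_jacobiTheta₂, h1, h2,
    jacobiTheta₂_add_left, jacobiTheta₂_functional_equation w τ]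
  generalize jacobiTheta₂ (w / τ) (-1 / τ) = θ
  generalize (-I * τ) ^ (1 / 2 : ℂ) = s at hs
  have he : cexp (π * I * (z / τ + 1 / 2) + π * I * (-1 / τ) / 4) =
      -I * cexp (π * I * z ^ 2 / τ) * cexp (π * I * (z + 1 / 2) + π * I * τ / 4) *
        cexp (-π * I * w ^ 2 / τ) := by
    rw [hI, ← Complex.exp_add, ← Complex.exp_add, ← Complex.exp_add, hw]
    congr 1
    field_simp
    ring
  rw [he]
  field_simp

lemma cpow_half_neg_I_mul {τ : ℂ} (hτ : 0 < τ.im) :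
    (-I * τ) ^ (1 / 2 : ℂ) = (Complex.sqrt I)⁻¹ * Complex.sqrt τ := by
  have h0 : τ ≠ 0 := fun h ↦ by simp [h] at hτ
  have hI : (-I : ℂ) = cexp (-(π / 2 * I)) := by
    rw [show (-(π / 2 * I) : ℂ) = -π / 2 * I by ring, exp_neg_pi_div_two_mul_I]
  -- `0 < arg τ`, so rotating by `-π/2` stays on the principal branch.
  have hlog : Complex.log (-I * τ) = Complex.log τ - π / 2 * I := by
    have harg := Complex.arg_nonneg_iff.2 hτ.le
    have harg' := Complex.arg_le_pi τ
    have hp := Real.pi_pos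
    have : -I * τ = cexp (Complex.log τ - π / 2 * I) := by
      rw [sub_eq_add_neg, Complex.exp_add, Complex.exp_log h0, ← hI, mul_comm]
    rw [this, Complex.log_exp]
    · simp [Complex.log_im]; linarith
    · simp [Complex.log_im]; linarith
  rw [Complex.cpow_def_of_ne_zero (by simp [h0]), hlog, Complex.sqrt, Complex.sqrt,
    Complex.cpow_def_of_ne_zero I_ne_zero, Complex.cpow_def_of_ne_zero h0, ← Complex.exp_neg, ← Complex.exp_add, Complex.log_I]
  congr 1
  ring

lemma dedekindEtaFn_inversion {τ : ℂ} (hτ : 0 < τ.im) :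
    dedekindEtaFn (-1 / τ) = (-I * τ) ^ (1 / 2 : ℂ) * dedekindEtaFn τ := by
  rw [dedekindEtaFn_eq_eta, dedekindEtaFn_eq_eta, cpow_half_neg_I_mul hτ]
  have := ModularForm.eta_comp_eq_csqrt_I_inv (x := τ) hτ
  simpa [mul_assoc] using this

lemma PhiFn_inversion (z : ℂ) {τ : ℂ} (hτ : 0 < τ.im) :
    PhiFn (z / τ) (-1 / τ) = τ⁻¹ * cexp (π * I * z ^ 2 / τ) * PhiFn z τ := by
  have h0 : τ ≠ 0 := fun h ↦ by simp [h] at hτ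
  have hη : dedekindEtaFn τ ≠ 0 := dedekindEtaFn_eq_eta τ ▸ ModularForm.eta_ne_zero hτ
  have hs : (-I * τ) ^ (1 / 2 : ℂ) ≠ 0 := by simp [Complex.cpow_eq_zero_iff, h0]
  have hsq : ((-I * τ) ^ (1 / 2 : ℂ)) ^ 2 = -I * τ := by
    rw [← Complex.cpow_nat_mul]; norm_num
  rw [PhiFn, PhiFn, jacobiThetaFn_inversion z h0, dedekindEtaFn_inversion hτ]
  generalize (-I * τ) ^ (1 / 2 : ℂ) = s at hs hsq
  have hpi : (π : ℂ) ≠ 0 := by exact_mod_cast Real.pi_ne_zero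
  field_simp
  linear_combination jacobiThetaFn z τ * hsq

/-! ### The law is closed under products and inverses -/

/-- The transformation law for the integral matrix `(a b; c d)`, for all `z` and all `τ` in the
upper half-plane. -/
def PhiLaw (a b c d : ℤ) : Prop :=
  ∀ z τ : ℂ, 0 < τ.im →
    PhiFn (z / (c * τ + d)) ((a * τ + b) / (c * τ + d)) =
      (c * τ + d)⁻¹ * cexp (π * I * c * z ^ 2 / (c * τ + d)) * PhiFn z τ

lemma denom_ne_zero_of_det {a b c d : ℤ} (hdet : a * d - b * c = 1) {τ : ℂ} (hτ : 0 < τ.im) :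
    (c * τ + d : ℂ) ≠ 0 := by
  intro h
  have him := congrArg Complex.im h
  have hre := congrArg Complex.re h
  simp at him hre
  rcases him with hc | hc
  · subst hc
    simp at hre
    simp [hre] at hdet
  · exact hτ.ne' hc

lemma moebius_im_pos {a b c d : ℤ} (hdet : a * d - b * c = 1) {τ : ℂ} (hτ : 0 < τ.im) :
    0 < ((a * τ + b) / (c * τ + d) : ℂ).im := by
  have hj := denom_ne_zero_of_det hdet hτ
  have hn : 0 < Complex.normSq (c * τ + d) := Complex.normSq_pos.2 hj
  have hdet' : (a * d - b * c : ℝ) = 1 := by exact_mod_cast hdet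
  have : ((a * τ + b) / (c * τ + d) : ℂ).im = τ.im / Complex.normSq (c * τ + d) := by
    rw [Complex.div_im, ← sub_div]
    congr 1
    simp
    linear_combination τ.im * hdet'
  rw [this]
  positivity

/-- The factors compose by the cocycle relation `c/j + c₂(cw + d) = ca₂ + dc₂`, where
`j = c₂τ + d₂` and `w = (a₂τ + b₂)/j`. -/
lemma PhiLaw.mul {a b c d a₂ b₂ c₂ d₂ : ℤ} (hdet : a * d - b * c = 1)
    (hdet' : a₂ * d₂ - b₂ * c₂ = 1) (h : PhiLaw a b c d) (h₂ : PhiLaw a₂ b₂ c₂ d₂) :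
    PhiLaw (a * a₂ + b * c₂) (a * b₂ + b * d₂) (c * a₂ + d * c₂) (c * b₂ + d * d₂) := by
  intro z τ hτ
  have hj := denom_ne_zero_of_det hdet' hτ
  have hw := moebius_im_pos hdet' hτ
  have hj' := denom_ne_zero_of_det hdet hw
  have key := h (z / (c₂ * τ + d₂)) _ hw
  rw [h₂ z τ hτ] at key
  have hD : (a₂ * d₂ - b₂ * c₂ : ℂ) = 1 := by exact_mod_cast hdet'
  set j : ℂ := c₂ * τ + d₂ with hjdef
  set w : ℂ := (a₂ * τ + b₂) / j with hwdef
  have hwj : w * j = a₂ * τ + b₂ := by rw [hwdef]; field_simp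
  have e1 : ((c * a₂ + d * c₂ : ℤ) : ℂ) * τ + ((c * b₂ + d * d₂ : ℤ) : ℂ) = (c * w + d) * j := by
    push_cast
    linear_combination (-c : ℂ) * hwj - d * hjdef
  have e2 : ((a * a₂ + b * c₂ : ℤ) : ℂ) * τ + ((a * b₂ + b * d₂ : ℤ) : ℂ) = (a * w + b) * j := by
    push_cast
    linear_combination (-a : ℂ) * hwj - b * hjdef
  have e3 : (c : ℂ) + c₂ * (c * w + d) * j = (c * a₂ + d * c₂) * j := by
    linear_combination (c * c₂ : ℂ) * hwj - c * a₂ * hjdef - (c : ℂ) * hD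
  rw [e1, e2, mul_div_mul_right _ _ hj, mul_comm _ j, ← div_div, key]
  have e4 : (π * I * ((c * a₂ + d * c₂ : ℤ) : ℂ) * z ^ 2 / (j * (c * w + d)) : ℂ) =
      π * I * c * (z / j) ^ 2 / (c * w + d) + π * I * c₂ * z ^ 2 / j := by
    push_cast
    field_simp
    linear_combination (-z ^ 2) * e3
  rw [e4, Complex.exp_add]
  field_simp

lemma PhiLaw.inv {a b c d : ℤ} (hdet : a * d - b * c = 1) (h : PhiLaw a b c d) :
    PhiLaw d (-b) (-c) a := by
  intro z τ hτ
  have hdet' : d * a - (-b) * (-c) = 1 := by linarith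
  have hj := denom_ne_zero_of_det hdet' hτ
  have hw := moebius_im_pos hdet' hτ
  have hj' := denom_ne_zero_of_det hdet hw
  have key := h (z / (((-c : ℤ) : ℂ) * τ + a)) _ hw
  have hD : (a * d - b * c : ℂ) = 1 := by exact_mod_cast hdet
  set j : ℂ := ((-c : ℤ) : ℂ) * τ + a with hjdef
  set w : ℂ := (d * τ + ((-b : ℤ) : ℂ)) / j with hwdef
  have hwj : w * j = d * τ + ((-b : ℤ) : ℂ) := by rw [hwdef]; field_simp
  push_cast at hwj hjdef
  have e1 : (c * w + d) * j = 1 := by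
    linear_combination (c : ℂ) * hwj + d * hjdef + hD
  have e2 : (a * w + b) * j = τ := by
    linear_combination (a : ℂ) * hwj + b * hjdef + τ * hD
  have e3 : (a * w + b) / (c * w + d) = τ := by
    rw [← mul_div_mul_right _ _ hj, e1, e2, div_one]
  have e4 : c * w + d = j⁻¹ := eq_inv_of_mul_eq_one_left e1
  rw [e3, e4] at key
  have e5 : z / j / j⁻¹ = z := by field_simp
  have e6 : (π * I * c * (z / j) ^ 2 / j⁻¹ : ℂ) = -(π * I * ((-c : ℤ) : ℂ) * z ^ 2 / j) := by
    push_cast; field_simp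
  rw [e5, e6, Complex.exp_neg] at key
  rw [key]
  have := Complex.exp_ne_zero (π * I * ((-c : ℤ) : ℂ) * z ^ 2 / j)
  field_simp

lemma PhiLaw_SL (g : Matrix.SpecialLinearGroup (Fin 2) ℤ) :
    PhiLaw (g 0 0) (g 0 1) (g 1 0) (g 1 1) := by
  have hdet (g : Matrix.SpecialLinearGroup (Fin 2) ℤ) :
      g 0 0 * g 1 1 - g 0 1 * g 1 0 = 1 := by
    rw [← Matrix.det_fin_two, g.det_coe]
  have hg : g ∈ Subgroup.closure {ModularGroup.S, ModularGroup.T} := by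
    simp [SpecialLinearGroup.SL2Z_generators]
  induction hg using Subgroup.closure_induction with
  | mem x hx =>
    rcases hx with rfl | rfl
    · intro z τ hτ
      simpa [ModularGroup.S] using PhiFn_inversion z hτ
    · intro z τ hτ
      simpa [ModularGroup.T] using PhiFn_add_one z τ
  | one =>
    intro z τ hτ
    simp
  | mul x y _ _ hx hy =>
    simpa [Matrix.mul_apply, Fin.sum_univ_two] using hx.mul (hdet x) (hdet y) hy
  | inv x _ hx =>
    simpa [Matrix.SpecialLinearGroup.SL2_inv_expl] using hx.inv (hdet x)

/-- The function `Φ(z;τ) = −ϑ(z;τ)/(2πη(τ)³)` satisfies the modular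
transformation law of a Jacobi form of weight `−1` and index `1/2`: for every
`(a b; c d) ∈ SL₂(ℤ)`, `z ∈ ℂ` and `τ ∈ ℍ`,
`Φ(z/(cτ+d); (aτ+b)/(cτ+d)) = (cτ+d)^{−1} e^{πicz²/(cτ+d)} Φ(z;τ)`. -/
theorem Phi_modular_transformation
    (a b c d : ℤ) (hdet : a * d - b * c = 1) (z τ : ℂ) (hτ : 0 < τ.im) :
    PhiFn (z / (c * τ + d)) ((a * τ + b) / (c * τ + d)) =
      (c * τ + d)⁻¹ * Complex.exp ((π : ℂ) * Complex.I * c * z ^ 2 / (c * τ + d)) *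
        PhiFn z τ := by
  simpa using PhiLaw_SL ⟨!![a, b; c, d], by rw [Matrix.det_fin_two_of, hdet]⟩ z τ hτ
end
end

section
/- Let k, a ∈ ℤ and let m be a nonnegative half-integer. Suppose φ is a complex-valued function of (z,τ) ∈ ℂ × ℍ, f : ℍ → ℂ is holomorphic and not identically zero with f((aτ+b)/(cτ+d)) = (cτ+d)^{k+a} f(τ) for all (a b; c d) ∈ SL₂(ℤ), and T_n : ℍ → ℂ (n ≥ 0) are holomorphic functions such that for every τ ∈ ℍ there is ε(τ) > 0 with φ(z;τ) = f(τ) ∑_{n≥0} T_n(τ) (2πiz)^{n+a} for 0 < |z| < ε(τ). Suppose further that φ satisfies the Jacobi modular law: for every (a b; c d) ∈ SL₂(ℤ), τ ∈ ℍ, and all z ≠ 0 sufficiently close to 0, φ(z/(cτ+d); (aτ+b)/(cτ+d)) = (cτ+d)^k e^{2πimcz²/(cτ+d)} φ(z;τ). Define T̂_n(τ) := ∑_{0≤j≤n/2} ((πm/v)^j / j!) (2πi)^{n−2j+a} T_{n−2j}(τ), where v = Im(τ). Then for every n ≥ 0 and every (a b; c d) ∈ SL₂(ℤ), T̂_n((aτ+b)/(cτ+d))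 = (cτ+d)^n T̂_n(τ); in particular T̂_n is an almost holomorphic modular form of weight n and depth at most ⌊n/2⌋. -/
/-!
Fix `γ = (A B; C D)`, write `J = Cτ + D`, and let `S_τ(X) = ∑ (2πi)^{n+a} T_n(τ) X^n` be the formal
Taylor series of `z^{-a} φ(z;τ) / f(τ)`. Since `∑ (w^j / j!) X^{2j} = e^{wX²}`, the completed trace
`T̂_n(τ)` is the `n`-th coefficient of `e^{πmX²/v} S_τ(X)` (`Tcomp_eq_coeff`).

If `f τ ≠ 0`, then inserting the expansions of `φ` into the Jacobi law, cancelling `f τ` by its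
modularity and comparing coefficients gives `S_{γτ}(X/J) = e^{2πimCX²/J} S_τ(X)`
(`rescale_traceSeries`). As `Im γτ = v/|J|²`, replacing `X` by `X/J` turns the exponential factor
`e^{πmX²/Im γτ}` into `e^{πm J̄ X²/(Jv)}`, and `J - J̄ = 2iCv` yields
`πm J̄/(Jv) + 2πimC/J = πm/v`. So the series for `γτ` at `X/J` is the series for `τ` at `X`, which
is the claim.

At the zeros of `f` the coefficients cannot be compared directly. These zeros are isolated, because
`f` is holomorphic and not identically zero on the connected set `ℍ`, and both sides of the claim
are continuous in `τ`; the identity therefore extends to them.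
-/


open Complex Filter
open scoped Real

noncomputable section

/-- The completed trace
`T̂_n(τ) = ∑_{0≤j≤n/2} ((πm/v)^j / j!) (2πi)^{n−2j+a} T_{n−2j}(τ)`, where `v = Im τ`. -/
def Tcomp (a : ℤ) (m : ℝ) (T : ℕ → ℂ → ℂ) (n : ℕ) (τ : ℂ) : ℂ :=
  ∑ j ∈ Finset.range (n / 2 + 1),
    (((π : ℂ) * (m : ℂ) / (τ.im : ℂ)) ^ j / (Nat.factorial j : ℂ)) *
      (2 * (π : ℂ) * Complex.I) ^ ((n : ℤ) - 2 * j + a) * T (n - 2 * j) τ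

open Topology

/-- The formal power series `e^{wX²}`. -/
def gaussSeries (w : ℂ) : PowerSeries ℂ :=
  PowerSeries.expand 2 two_ne_zero (PowerSeries.rescale w (PowerSeries.exp ℂ))

/-- The formal power series `∑ (2πi)^{n+a} T_n(τ) X^n`, i.e. the Taylor series of
`z^{-a} φ(z;τ) / f(τ)`. -/
def traceSeries (a : ℤ) (T : ℕ → ℂ → ℂ) (τ : ℂ) : PowerSeries ℂ :=
  PowerSeries.mk fun n => (2 * (π : ℂ) * Complex.I) ^ ((n : ℤ) + a) * T n τ

theorem coeff_gaussSeries (w : ℂ) (n : ℕ) :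
    PowerSeries.coeff n (gaussSeries w) =
      if 2 ∣ n then w ^ (n / 2) / (Nat.factorial (n / 2) : ℂ) else 0 := by
  rw [gaussSeries, PowerSeries.coeff_expand]
  simp [PowerSeries.coeff_rescale, PowerSeries.coeff_exp, div_eq_mul_inv]

theorem coeff_two_mul_gaussSeries (w : ℂ) (j : ℕ) :
    PowerSeries.coeff (2 * j) (gaussSeries w) = w ^ j / (Nat.factorial j : ℂ) := by
  simp [coeff_gaussSeries]

theorem gaussSeries_mul (w w' : ℂ) :
    gaussSeries w * gaussSeries w' = gaussSeries (w + w') := by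
  simp only [gaussSeries]
  rw [← map_mul, PowerSeries.exp_mul_exp_eq_exp_add]

theorem rescale_gaussSeries (c w : ℂ) :
    PowerSeries.rescale c (gaussSeries w) = gaussSeries (c ^ 2 * w) := by
  ext n
  rw [PowerSeries.coeff_rescale, coeff_gaussSeries, coeff_gaussSeries]
  split_ifs with h
  · obtain ⟨j, rfl⟩ := h
    simp [mul_pow, pow_mul, mul_div_assoc]
  · simp

theorem Tcomp_eq_coeff (a : ℤ) (m : ℝ) (T : ℕ → ℂ → ℂ) (n : ℕ) (τ : ℂ) :
    Tcomp a m T n τ = PowerSeries.coeff n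
      (gaussSeries ((π : ℂ) * (m : ℂ) / (τ.im : ℂ)) * traceSeries a T τ) := by
  rw [PowerSeries.coeff_mul, Finset.Nat.sum_antidiagonal_eq_sum_range_succ_mk, Tcomp]
  refine Finset.sum_of_injOn (fun j => 2 * j) (fun _ _ _ _ h => by simpa using h) ?_ ?_ ?_
  · intro j hj
    simp only [Finset.coe_range, Set.mem_Iio] at hj ⊢
    omega
  · intro i hi hni
    rw [coeff_gaussSeries, if_neg, zero_mul]
    rintro ⟨j, rfl⟩
    refine hni ⟨j, ?_, rfl⟩
    simp only [Finset.coe_range, Set.mem_Iio, Finset.mem_range] at hi ⊢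
    omega
  · intro j hj
    have hj' : 2 * j ≤ n := by
      simp only [Finset.mem_range] at hj
      omega
    simp only [coeff_two_mul_gaussSeries, traceSeries, PowerSeries.coeff_mk]
    rw [Nat.cast_sub hj']
    push_cast
    ring

/-- Pointwise convergence of a formal power series `P` at `z` to the value `s`. -/
def SumsTo (P : PowerSeries ℂ) (z s : ℂ) : Prop :=
  HasSum (fun n : ℕ => PowerSeries.coeff n P * z ^ n) s

theorem SumsTo.mul {P Q : PowerSeries ℂ} {z s t : ℂ} (hP : SumsTo P z s) (hQ : SumsTo Q z t) :
    SumsTo (P * Q) z (s * t) := by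
  have hs := summable_norm_sum_mul_antidiagonal_of_summable_norm hP.summable.norm hQ.summable.norm
  have ht := tsum_mul_tsum_eq_tsum_sum_antidiagonal_of_summable_norm
    hP.summable.norm hQ.summable.norm
  rw [hP.tsum_eq, hQ.tsum_eq] at ht
  have h := hs.of_norm.hasSum
  rw [← ht] at h
  refine h.congr_fun ?_
  intro n
  rw [PowerSeries.coeff_mul, Finset.sum_mul]
  refine Finset.sum_congr rfl fun p hp => ?_
  rw [← Finset.HasAntidiagonal.mem_antidiagonal.1 hp, pow_add]
  ring

theorem sumsTo_gaussSeries (w z : ℂ) : SumsTo (gaussSeries w) z (Complex.exp (w * z ^ 2)) := by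
  have h : HasSum (fun j : ℕ => (w * z ^ 2) ^ j / (Nat.factorial j : ℂ))
      (Complex.exp (w * z ^ 2)) := by
    rw [Complex.exp_eq_exp_ℂ]
    exact NormedSpace.expSeries_div_hasSum_exp _
  have hinj : Function.Injective (fun j : ℕ => 2 * j) := fun _ _ h => by simpa using h
  refine (hinj.hasSum_iff ?_).1 (h.congr_fun ?_)
  · intro i hi
    rw [coeff_gaussSeries, if_neg, zero_mul]
    rintro ⟨j, rfl⟩
    exact hi ⟨j, rfl⟩
  · intro j
    simp only [Function.comp, coeff_two_mul_gaussSeries, mul_pow, pow_mul]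
    ring

theorem SumsTo.rescale {P : PowerSeries ℂ} {c z s : ℂ} (h : SumsTo P (c * z) s) :
    SumsTo (PowerSeries.rescale c P) z s := by
  refine h.congr_fun fun n => ?_
  rw [PowerSeries.coeff_rescale, mul_pow]
  ring

/-- Comparison of coefficients: convergence on a punctured disc to the same values forces two
power series to coincide. -/
theorem SumsTo.unique {P Q : PowerSeries ℂ} {g : ℂ → ℂ}
    (hP : ∀ᶠ z in 𝓝[≠] (0 : ℂ), SumsTo P z (g z))
    (hQ : ∀ᶠ z in 𝓝[≠] (0 : ℂ), SumsTo Q z (g z)) : P = Q := by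
  -- The value of `g` at `0` is irrelevant; it is replaced by the constant coefficient.
  have key : ∀ R : PowerSeries ℂ, (∀ᶠ z in 𝓝[≠] (0 : ℂ), SumsTo R z (g z)) →
      HasFPowerSeriesAt (Function.update g 0 (PowerSeries.coeff 0 R))
        (FormalMultilinearSeries.ofScalars ℂ fun n => PowerSeries.coeff n R) 0 := by
    intro R hR
    rw [hasFPowerSeriesAt_iff]
    rw [eventually_nhdsWithin_iff] at hR
    filter_upwards [hR] with z hz
    rw [zero_add]
    by_cases h0 : z = 0
    · subst h0
      rw [Function.update_self]
      convert hasSum_single (0 : ℕ) ?_ using 1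
      · simp [FormalMultilinearSeries.coeff_ofScalars]
      · intro n hn
        simp [hn]
    · rw [Function.update_of_ne h0]
      refine (hz h0).congr_fun fun n => ?_
      simp [FormalMultilinearSeries.coeff_ofScalars, mul_comm]
  have h1 := key P hP
  have h2 := key Q hQ
  have hev := (h1.analyticAt.frequently_eq_iff_eventually_eq h2.analyticAt).1
    (Eventually.frequently (by
      filter_upwards [self_mem_nhdsWithin] with z hz
      rw [Function.update_of_ne hz, Function.update_of_ne hz]))
  have h := h1.eq_formalMultilinearSeries_of_eventually h2 hev
  ext n
  simpa [FormalMultilinearSeries.coeff_ofScalars] using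
    congrArg (fun p => FormalMultilinearSeries.coeff p n) h

theorem sumsTo_traceSeries {a : ℤ} {T : ℕ → ℂ → ℂ} {τ c z s : ℂ} (hc : c ≠ 0) (hz : z ≠ 0)
    (h : HasSum (fun n : ℕ => c * T n τ * (2 * (π : ℂ) * Complex.I * z) ^ ((n : ℤ) + a)) s) :
    SumsTo (traceSeries a T τ) z (c⁻¹ * z ^ (-a) * s) := by
  refine (h.mul_left (c⁻¹ * z ^ (-a))).congr_fun fun n => ?_
  rw [traceSeries, PowerSeries.coeff_mk, mul_zpow _ z, zpow_add₀ hz, zpow_natCast, zpow_neg]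
  have := zpow_ne_zero a hz
  field_simp

theorem denom_ne_zero {A B C D : ℤ} (hdet : A * D - B * C = 1) {τ : ℂ} (hτ : 0 < τ.im) :
    (C : ℂ) * τ + D ≠ 0 := by
  intro h
  have him := congrArg Complex.im h
  have hre := congrArg Complex.re h
  simp at him hre
  rcases him with hC | hv
  · subst hC
    simp at hre
    subst hre
    simp at hdet
  · exact hτ.ne' hv

theorem im_moebius {A B C D : ℤ} (hdet : A * D - B * C = 1) (τ : ℂ) :
    (((A : ℂ) * τ + B) / (C * τ + D)).im = τ.im / Complex.normSq (C * τ + D) := by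
  have hdetR : (A : ℝ) * D - B * C = 1 := by exact_mod_cast hdet
  rw [Complex.div_im, ← sub_div]
  congr 1
  simp
  linear_combination τ.im * hdetR

/-- The Jacobi law in terms of Taylor coefficients, away from the zeros of `f`. -/
theorem rescale_traceSeries {k a : ℤ} {m : ℝ} {φ : ℂ → ℂ → ℂ} {f : ℂ → ℂ} {T : ℕ → ℂ → ℂ}
    (hfmod : ∀ A B C D : ℤ, A * D - B * C = 1 → ∀ τ : ℂ, 0 < τ.im →
      f ((A * τ + B) / (C * τ + D)) = (C * τ + D) ^ (k + a) * f τ)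
    (hexp : ∀ τ : ℂ, 0 < τ.im → ∃ ε > 0, ∀ z : ℂ, 0 < ‖z‖ → ‖z‖ < ε →
      HasSum (fun n : ℕ =>
          f τ * T n τ * (2 * (π : ℂ) * Complex.I * z) ^ ((n : ℤ) + a)) (φ z τ))
    (hjac : ∀ A B C D : ℤ, A * D - B * C = 1 → ∀ τ : ℂ, 0 < τ.im →
      ∃ δ > 0, ∀ z : ℂ, 0 < ‖z‖ → ‖z‖ < δ →
        φ (z / (C * τ + D)) ((A * τ + B) / (C * τ + D)) =
          (C * τ + D) ^ k *
            Complex.exp (2 * (π : ℂ) * Complex.I * (m : ℂ) * C * z ^ 2 / (C * τ + D)) *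
            φ z τ)
    {A B C D : ℤ} (hdet : A * D - B * C = 1) {τ : ℂ} (hτ : 0 < τ.im) (hfτ : f τ ≠ 0) :
    PowerSeries.rescale ((C : ℂ) * τ + D)⁻¹ (traceSeries a T ((A * τ + B) / (C * τ + D))) =
      gaussSeries (2 * (π : ℂ) * Complex.I * (m : ℂ) * C / (C * τ + D)) *
        traceSeries a T τ := by
  have hJ := denom_ne_zero hdet hτ
  have hτ' : 0 < (((A : ℂ) * τ + B) / (C * τ + D)).im := by
    rw [im_moebius hdet]
    exact div_pos hτ (Complex.normSq_pos.2 hJ)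
  have hfm := hfmod A B C D hdet τ hτ
  obtain ⟨ε, hε, h1⟩ := hexp τ hτ
  obtain ⟨ε', hε', h2⟩ := hexp _ hτ'
  obtain ⟨δ, hδ, h3⟩ := hjac A B C D hdet τ hτ
  generalize ((A : ℂ) * τ + B) / (C * τ + D) = τ' at *
  generalize (C : ℂ) * τ + D = J at *
  have hsmall : ∀ r > 0, ∀ᶠ z in 𝓝[≠] (0 : ℂ), ‖z‖ < r := fun r hr =>
    nhdsWithin_le_nhds ((continuous_norm.tendsto' (0 : ℂ) 0 norm_zero).eventually_lt_const hr)
  have hsmall' : ∀ᶠ z in 𝓝[≠] (0 : ℂ), ‖z / J‖ < ε' := by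
    filter_upwards [hsmall (ε' * ‖J‖) (mul_pos hε' (norm_pos_iff.2 hJ))] with z hz
    rwa [norm_div, div_lt_iff₀ (norm_pos_iff.2 hJ)]
  refine SumsTo.unique (g := fun z =>
    Complex.exp (2 * (π : ℂ) * Complex.I * (m : ℂ) * C / J * z ^ 2) *
      ((f τ)⁻¹ * z ^ (-a) * φ z τ)) ?_ ?_
  · filter_upwards [self_mem_nhdsWithin, hsmall', hsmall δ hδ] with z hz hzJ hzδ
    have hz0 : z ≠ 0 := hz
    have hf' : f τ' ≠ 0 := by
      rw [hfm]
      exact mul_ne_zero (zpow_ne_zero _ hJ) hfτ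
    have hs := sumsTo_traceSeries hf' (div_ne_zero hz0 hJ)
      (h2 (z / J) (norm_pos_iff.2 (div_ne_zero hz0 hJ)) hzJ)
    rw [div_eq_inv_mul] at hs
    convert hs.rescale using 1
    rw [← div_eq_inv_mul z J, h3 z (norm_pos_iff.2 hz0) hzδ, hfm, zpow_add₀ hJ, div_zpow,
      zpow_neg, zpow_neg, div_mul_eq_mul_div _ J]
    have := zpow_ne_zero a hJ
    have := zpow_ne_zero k hJ
    have := zpow_ne_zero a hz0
    field_simp
  · filter_upwards [self_mem_nhdsWithin, hsmall ε hε] with z hz hzε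
    exact (sumsTo_gaussSeries _ z).mul
      (sumsTo_traceSeries hfτ hz (h1 z (norm_pos_iff.2 hz) hzε))

theorem continuousAt_Tcomp {a : ℤ} {m : ℝ} {T : ℕ → ℂ → ℂ}
    (hT : ∀ n : ℕ, DifferentiableOn ℂ (T n) {τ : ℂ | 0 < τ.im}) (n : ℕ) {τ : ℂ}
    (hτ : 0 < τ.im) : ContinuousAt (Tcomp a m T n) τ := by
  have hopen : IsOpen {τ : ℂ | 0 < τ.im} := isOpen_lt continuous_const Complex.continuous_im
  have hTc : ∀ n, ContinuousAt (T n) τ := fun n =>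
    ((hT n).differentiableAt (hopen.mem_nhds hτ)).continuousAt
  have him : ContinuousAt (fun τ : ℂ => (τ.im : ℂ)) τ := by fun_prop
  have hne : (τ.im : ℂ) ≠ 0 := Complex.ofReal_ne_zero.2 hτ.ne'
  unfold Tcomp
  refine tendsto_finsetSum _ fun j _ => ?_
  exact ((((continuousAt_const.div him hne).pow j).div_const _).mul continuousAt_const).mul (hTc _)

/-- The series identity at `τ` implies the transformation law at `τ`: the exponents of the two
Gaussian factors add up to `πm/v`. -/
theorem Tcomp_moebius_of_rescale {a : ℤ} {m : ℝ} {T : ℕ → ℂ → ℂ}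
    {A B C D : ℤ} (hdet : A * D - B * C = 1) {τ : ℂ} (hτ : 0 < τ.im)
    (h : PowerSeries.rescale ((C : ℂ) * τ + D)⁻¹ (traceSeries a T ((A * τ + B) / (C * τ + D))) =
      gaussSeries (2 * (π : ℂ) * Complex.I * (m : ℂ) * C / (C * τ + D)) * traceSeries a T τ)
    (n : ℕ) :
    Tcomp a m T n ((A * τ + B) / (C * τ + D)) = (C * τ + D) ^ n * Tcomp a m T n τ := by
  have hJ := denom_ne_zero hdet hτ
  have hv : (τ.im : ℂ) ≠ 0 := Complex.ofReal_ne_zero.2 hτ.ne'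
  have hconj : (C : ℂ) * τ + D - (starRingEnd ℂ) (C * τ + D) = 2 * Complex.I * C * τ.im := by
    rw [Complex.sub_conj]
    simp
    ring
  have hw : (((C : ℂ) * τ + D)⁻¹) ^ 2 *
        ((π : ℂ) * m / ((((A : ℂ) * τ + B) / (C * τ + D)).im : ℂ)) +
      2 * (π : ℂ) * Complex.I * (m : ℂ) * C / (C * τ + D) = (π : ℂ) * m / (τ.im : ℂ) := by
    rw [im_moebius hdet, Complex.ofReal_div, ← Complex.mul_conj]
    have hJ' : (starRingEnd ℂ) ((C : ℂ) * τ + D) ≠ 0 := (map_ne_zero _).2 hJ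
    generalize (starRingEnd ℂ) ((C : ℂ) * τ + D) = J' at *
    generalize (C : ℂ) * τ + D = J at *
    field_simp
    linear_combination (-(m : ℂ)) * hconj
  have hs : PowerSeries.rescale ((C : ℂ) * τ + D)⁻¹
      (gaussSeries ((π : ℂ) * m / ((((A : ℂ) * τ + B) / (C * τ + D)).im : ℂ)) *
        traceSeries a T ((A * τ + B) / (C * τ + D))) =
      gaussSeries ((π : ℂ) * m / (τ.im : ℂ)) * traceSeries a T τ := by
    rw [map_mul, h, rescale_gaussSeries, ← mul_assoc, gaussSeries_mul, hw]
  rw [Tcomp_eq_coeff, Tcomp_eq_coeff, ← hs, PowerSeries.coeff_rescale, ← mul_assoc, ← mul_pow,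
    mul_inv_cancel₀ hJ, one_pow, one_mul]

/-- Let `k, a ∈ ℤ` and `m` a nonnegative half-integer. Suppose
`φ(z;τ) = f(τ) ∑_{n≥0} T_n(τ) (2πiz)^{n+a}` near `z = 0`, with `f` holomorphic on ℍ, not
identically zero, and modular of weight `k+a`, the `T_n` holomorphic on ℍ, and suppose `φ`
satisfies the Jacobi modular law of weight `k` and index `m`. Then each completed trace
`T̂_n` transforms like a modular form of weight `n`:
`T̂_n((aτ+b)/(cτ+d)) = (cτ+d)^n T̂_n(τ)` (hence, being a polynomial in `1/v` of degree at
most `⌊n/2⌋` with holomorphic coefficients, it is an almost holomorphic modular form of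
weight `n` and depth at most `⌊n/2⌋`). -/
theorem completed_trace_modular
    (k a : ℤ) (m : ℝ) (hm : ∃ j : ℕ, m = (j : ℝ) / 2)
    (φ : ℂ → ℂ → ℂ) (f : ℂ → ℂ) (T : ℕ → ℂ → ℂ)
    (hf : DifferentiableOn ℂ f {τ : ℂ | 0 < τ.im})
    (hf0 : ∃ τ : ℂ, 0 < τ.im ∧ f τ ≠ 0)
    (hfmod : ∀ A B C D : ℤ, A * D - B * C = 1 → ∀ τ : ℂ, 0 < τ.im →
      f ((A * τ + B) / (C * τ + D)) = (C * τ + D) ^ (k + a) * f τ)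
    (hT : ∀ n : ℕ, DifferentiableOn ℂ (T n) {τ : ℂ | 0 < τ.im})
    (hexp : ∀ τ : ℂ, 0 < τ.im → ∃ ε > 0, ∀ z : ℂ, 0 < ‖z‖ → ‖z‖ < ε →
      HasSum (fun n : ℕ =>
          f τ * T n τ * (2 * (π : ℂ) * Complex.I * z) ^ ((n : ℤ) + a)) (φ z τ))
    (hjac : ∀ A B C D : ℤ, A * D - B * C = 1 → ∀ τ : ℂ, 0 < τ.im →
      ∃ δ > 0, ∀ z : ℂ, 0 < ‖z‖ → ‖z‖ < δ →
        φ (z / (C * τ + D)) ((A * τ + B) / (C * τ + D)) =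
          (C * τ + D) ^ k *
            Complex.exp (2 * (π : ℂ) * Complex.I * (m : ℂ) * C * z ^ 2 / (C * τ + D)) *
            φ z τ)
    (n : ℕ) (A B C D : ℤ) (hdet : A * D - B * C = 1) (τ : ℂ) (hτ : 0 < τ.im) :
    Tcomp a m T n ((A * τ + B) / (C * τ + D)) = (C * τ + D) ^ n * Tcomp a m T n τ := by
  have hopen : IsOpen {τ : ℂ | 0 < τ.im} := isOpen_lt continuous_const Complex.continuous_im
  have hconn : IsPreconnected {τ : ℂ | 0 < τ.im} :=
    (convex_halfSpace_im_gt 0).isPreconnected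
  have hne : ∀ᶠ w in 𝓝[≠] τ, f w ≠ 0 := by
    by_contra hfreq
    obtain ⟨τ₀, hτ₀, hfτ₀⟩ := hf0
    refine hfτ₀ ((hf.analyticOnNhd hopen).eqOn_zero_of_preconnected_of_frequently_eq_zero
      hconn hτ ?_ hτ₀)
    exact (not_eventually.1 hfreq).mono fun _ h => not_not.1 h
  have hJ := denom_ne_zero hdet hτ
  have hτ' : 0 < (((A : ℂ) * τ + B) / (C * τ + D)).im := by
    rw [im_moebius hdet]
    exact div_pos hτ (Complex.normSq_pos.2 hJ)
  have hmoeb : ContinuousAt (fun w : ℂ => ((A : ℂ) * w + B) / (C * w + D)) τ :=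
    ContinuousAt.div (by fun_prop) (by fun_prop) hJ
  have hL : ContinuousAt (fun w : ℂ => Tcomp a m T n ((A * w + B) / (C * w + D))) τ :=
    ContinuousAt.comp_of_eq (g := Tcomp a m T n) (continuousAt_Tcomp hT n hτ') hmoeb rfl
  have hR : ContinuousAt (fun w : ℂ => ((C : ℂ) * w + D) ^ n * Tcomp a m T n w) τ :=
    ContinuousAt.mul (by fun_prop) (continuousAt_Tcomp hT n hτ)
  refine tendsto_nhds_unique_of_eventuallyEq (l := 𝓝[≠] τ)
    (hL.tendsto.mono_left nhdsWithin_le_nhds) (hR.tendsto.mono_left nhdsWithin_le_nhds) ?_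
  filter_upwards [hne, nhdsWithin_le_nhds (hopen.mem_nhds hτ)] with w hfw hw
  exact Tcomp_moebius_of_rescale hdet hw (rescale_traceSeries hfmod hexp hjac hdet hw hfw) n
end
end

section
/- Let a ∈ ℤ, let m be a nonnegative half-integer, and let T_n : ℍ → ℂ (n ≥ 0) be holomorphic functions. Define T̂_n(τ) := ∑_{0≤j≤n/2} ((πm/v)^j / j!) (2πi)^{n−2j+a} T_{n−2j}(τ), where τ = u + iv. Then T̂₀(τ) = (2πi)^a T₀(τ), T̂₁(τ) = (2πi)^{1+a} T₁(τ), and for every n ≥ 2 the lowering operator satisfies L(T̂_n)(τ) = −πm · T̂_{n−2}(τ). -/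
/-!
Since `∂v/∂τ̄ = i/2`, the operator `L = -2iv² ∂/∂τ̄` acts on functions of `v` as `v² d/dv`, and it is
linear over holomorphic functions, which are killed by `∂/∂τ̄`. Hence `L` sends the `j`-th
coefficient `(πm/v)^j / j!` to `-πm (πm/v)^(j-1) / (j-1)!` and kills the one with `j = 0`. This is
`hasFDerivAt_completed_term`. Summing over `j` and shifting `j` by one turns `T̂_n` into
`-πm T̂_{n-2}`, because `n - 2j = (n - 2) - 2(j - 1)`.
-/

open Complex Filter
open scoped Real

noncomputable section

/-- The lowering operator `L = -2iv² ∂/∂τ̄`, where `∂/∂τ̄ = (1/2)(∂/∂u + i ∂/∂v)`. -/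
def lowerOp (f : ℂ → ℂ) (τ : ℂ) : ℂ :=
  -2 * Complex.I * (τ.im : ℂ) ^ 2 *
    ((1 / 2 : ℂ) * (fderiv ℝ f τ 1 + Complex.I * fderiv ℝ f τ Complex.I))

/-- The real derivative `f'` of one summand `(c/v)^j / j! · K · F(τ)`, with `F` holomorphic at `τ`,
together with the value of `-2iv² ∂/∂τ̄` on it. At `j = 0` that value vanishes because of the
factor `j`, so the truncated exponent `j - 1` is harmless. -/
theorem hasFDerivAt_completed_term (c K : ℂ) (j : ℕ) (F : ℂ → ℂ) (τ : ℂ) (hτ : 0 < τ.im)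
    (hF : DifferentiableAt ℂ F τ) :
    ∃ f' : ℂ →L[ℝ] ℂ,
      HasFDerivAt (fun z : ℂ => (c / (z.im : ℂ)) ^ j / (Nat.factorial j : ℂ) * K * F z) f' τ ∧
      -2 * Complex.I * (τ.im : ℂ) ^ 2 * ((1 / 2 : ℂ) * (f' 1 + Complex.I * f' Complex.I)) =
        -c * ((j : ℂ) * (c / (τ.im : ℂ)) ^ (j - 1) / (Nat.factorial j : ℂ) * K * F τ) := by
  have hv : (τ.im : ℂ) ≠ 0 := by exact_mod_cast hτ.ne'
  have him : HasFDerivAt (fun z : ℂ => (z.im : ℂ))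
      (Complex.ofRealCLM.comp Complex.imCLM) τ :=
    (Complex.ofRealCLM.comp Complex.imCLM).hasFDerivAt
  have hcoef : HasDerivAt (fun w : ℂ => (c / w) ^ j / (Nat.factorial j : ℂ) * K)
      ((j : ℂ) * (c / (τ.im : ℂ)) ^ (j - 1) * (c * -((τ.im : ℂ) ^ 2)⁻¹) /
        (Nat.factorial j : ℂ) * K) (τ.im : ℂ) := by
    have h := (((hasDerivAt_inv hv).const_mul c).pow j).div_const (Nat.factorial j : ℂ)
    simpa [div_eq_mul_inv] using h.mul_const K
  have hF' := hF.hasDerivAt.hasFDerivAt.restrictScalars ℝ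
  have hcomp := (hcoef.hasFDerivAt.restrictScalars ℝ).comp τ him
  refine ⟨_, hcomp.mul hF', ?_⟩
  simp
  field_simp
  ring_nf
  simp

/-- Let `a ∈ ℤ`, `m` a nonnegative half-integer, and `T_n : ℍ → ℂ`
holomorphic. Then `T̂₀ = (2πi)^a T₀`, `T̂₁ = (2πi)^{1+a} T₁`, and for `n ≥ 2` the lowering
operator satisfies `L(T̂_n) = −πm·T̂_{n−2}` on ℍ. -/
theorem completed_trace_lowering
    (a : ℤ) (m : ℝ) (hm : ∃ j : ℕ, m = (j : ℝ) / 2)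
    (T : ℕ → ℂ → ℂ)
    (hT : ∀ n : ℕ, DifferentiableOn ℂ (T n) {τ : ℂ | 0 < τ.im}) :
    (∀ τ : ℂ, 0 < τ.im →
      Tcomp a m T 0 τ = (2 * (π : ℂ) * Complex.I) ^ a * T 0 τ) ∧
    (∀ τ : ℂ, 0 < τ.im →
      Tcomp a m T 1 τ = (2 * (π : ℂ) * Complex.I) ^ (1 + a) * T 1 τ) ∧
    (∀ n : ℕ, 2 ≤ n → ∀ τ : ℂ, 0 < τ.im →
      lowerOp (Tcomp a m T n) τ = -(π : ℂ) * (m : ℂ) * Tcomp a m T (n - 2) τ) := by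
  refine ⟨fun τ _ => by simp [Tcomp], fun τ _ => by simp [Tcomp], fun n hn τ hτ => ?_⟩
  have hhol : ∀ k, DifferentiableAt ℂ (T k) τ := fun k =>
    (hT k).differentiableAt ((isOpen_lt continuous_const Complex.continuous_im).mem_nhds hτ)
  choose f' hf' hL using fun j : ℕ => hasFDerivAt_completed_term ((π : ℂ) * (m : ℂ))
    ((2 * (π : ℂ) * Complex.I) ^ ((n : ℤ) - 2 * j + a)) j (T (n - 2 * j)) τ hτ (hhol _)
  have hsum : HasFDerivAt (Tcomp a m T n) (∑ j ∈ Finset.range (n / 2 + 1), f' j) τ :=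
    HasFDerivAt.fun_sum fun j _ => hf' j
  obtain ⟨k, rfl⟩ := Nat.exists_eq_add_of_le' hn
  have hk : (k + 2) / 2 = k / 2 + 1 := by omega
  rw [lowerOp, hsum.fderiv]
  simp only [_root_.sum_apply, Finset.mul_sum, ← Finset.sum_add_distrib, hL]
  -- The `j = 0` summand vanishes, and the remaining ones are those of `T̂_{n-2}` shifted by one.
  rw [Finset.sum_range_succ', hk, Tcomp, Finset.mul_sum]
  simp only [Nat.add_sub_cancel, Nat.cast_zero, zero_mul, zero_div, mul_zero, add_zero]
  refine Finset.sum_congr rfl fun j _ => ?_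
  have hidx : k + 2 - 2 * (j + 1) = k - 2 * j := by omega
  have hexp : ((k + 2 : ℕ) : ℤ) - 2 * ((j + 1 : ℕ) : ℤ) + a = (k : ℤ) - 2 * j + a := by
    push_cast; ring
  have hj : ((j + 1 : ℕ) : ℂ) ≠ 0 := Nat.cast_ne_zero.mpr j.succ_ne_zero
  have hfac : (Nat.factorial j : ℂ) ≠ 0 := Nat.cast_ne_zero.mpr j.factorial_ne_zero
  rw [hidx, hexp, Nat.factorial_succ, Nat.cast_mul, mul_div_mul_left _ _ hj]
  ring
end
end
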